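/- Let a : [n] × [n] → ℝ be symmetric and satisfy the anti-tree-metric property a(i,j) + a(k,l) ≥ min(a(i,k)+a(j,l), a(i,l)+a(j,k)) for all distinct i,j,k,l. Let α* := min over distinct pairs of a(i,j), and define b_k := min_{j ≠ k} a(k,j) − α* for each k. Then the function (i,j) ↦ a(i,j) − b_i − b_j satisfies the anti-ultrametric property: a(i,j) − b_i − b_j ≥ min(a(i,k) − b_i − b_k, a(j,k) − b_j − b_k) for all distinct i,j,k. -/

import Mathlib

/-- Farris transform: if a real symmetric `a` satisfies the
anti-tree-metric property, `α*` is the minimum of `a` over distinct pairs, and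
`b k = min_{j≠k} a k j − α*`, then `(i,j) ↦ a i j − b i − b j` satisfies the
anti-ultrametric property. -/
theorem stmt3 (n : ℕ) (hn : 3 ≤ n) (a : Fin n → Fin n → ℝ)
    (hsym : ∀ i j, a i j = a j i)
    (htree : ∀ i j k l : Fin n, i ≠ j → i ≠ k → i ≠ l → j ≠ k → j ≠ l → k ≠ l →
      a i j + a k l ≥ min (a i k + a j l) (a i l + a j k))
    (αstar : ℝ) (hα : IsLeast {v : ℝ | ∃ i j : Fin n, i ≠ j ∧ v = a i j} αstar)
    (b : Fin n → ℝ)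
    (hb : ∀ k : Fin n, IsLeast {v : ℝ | ∃ j : Fin n, j ≠ k ∧ v = a k j} (b k + αstar)) :
    ∀ i j k : Fin n, i ≠ j → j ≠ k → i ≠ k →
      a i j - b i - b j ≥ min (a i k - b i - b k) (a j k - b j - b k) := by
  intro i j k hij hjk hik
  have hlow : ∀ x y : Fin n, y ≠ x → b x + αstar ≤ a x y :=
    fun x y h => (hb x).2 ⟨y, h, rfl⟩
  obtain ⟨l, hlk, hl⟩ := (hb k).1
  by_cases hli : l = i
  · subst hli
    have h1 := hlow j l hij
    have h2 := hsym j l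
    have h3 := hsym k l
    exact (min_le_left _ _).trans (by linarith)
  by_cases hlj : l = j
  · subst hlj
    have h1 := hlow i l hli
    have h3 := hsym k l
    exact (min_le_right _ _).trans (by linarith)
  have h := htree i j k l hij hik (Ne.symm hli) hjk (Ne.symm hlj) (Ne.symm hlk)
  have h1 := hlow i l hli
  have h2 := hlow j l hlj
  rcases min_le_iff.1 h with h | h
  · exact (min_le_left _ _).trans (by linarith)
  · exact (min_le_right _ _).trans (by linarith)
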